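/- arXiv:1010.1380 — 3 statements merged into one kernel-verified Lean document; each statement's English description precedes it below -/
import Mathlib

section
/- Existence and uniqueness of the inradius: let n ≥ 3 and β : Fin n → ℝ with 0 < β i < π for all i and ∑ i, (π − β i) > 2π. Then there exists a unique r > 0 such that ∑ i, 2·Real.arcsin(cos(β i / 2) / cosh r) = 2π. -/
open Real
open Filter Set Topology

/-!
As `r` runs over `[0, ∞)`, the angle `2 * arcsin (cos (β / 2) / cosh r)` decreases strictly and
continuously from the exterior angle `π - β`, its Euclidean limit, to `0`. Hence the total angle at
the incenter takes each value strictly between `0` and the sum of the exterior angles exactly once.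
-/

theorem strictAntiOn_finsetSum {ι α M : Type*} [Preorder α] [AddCommMonoid M] [PartialOrder M]
    [IsOrderedCancelAddMonoid M] {s : Finset ι} (hs : s.Nonempty) {t : Set α} {f : ι → α → M}
    (hf : ∀ i ∈ s, StrictAntiOn (f i) t) : StrictAntiOn (fun x ↦ ∑ i ∈ s, f i x) t :=
  fun _ hx _ hy hxy ↦ Finset.sum_lt_sum_of_nonempty hs fun i hi ↦ hf i hi hx hy hxy

theorem existsUnique_gt_eq_of_strictAntiOn_of_tendsto {X Y : Type*}
    [ConditionallyCompleteLinearOrder X] [TopologicalSpace X] [OrderTopology X] [DenselyOrdered X]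
    [NoMaxOrder X] [LinearOrder Y] [TopologicalSpace Y] [OrderClosedTopology Y]
    {f : X → Y} {a : X} {l y : Y} (hanti : StrictAntiOn f (Ici a)) (hcont : ContinuousOn f (Ici a))
    (hlim : Tendsto f atTop (𝓝 l)) (hy : y ∈ Ioo l (f a)) : ∃! x, a < x ∧ f x = y := by
  have : Nonempty X := ⟨a⟩
  have hright : Tendsto f (𝓝[>] a) (𝓝 (f a)) :=
    (hcont a self_mem_Ici).mono Ioi_subset_Ici_self
  obtain ⟨x, hx, hfx⟩ : y ∈ f '' Ioi a :=
    isPreconnected_Ioi.intermediate_value_Ioo (le_principal_iff.2 (Ioi_mem_atTop a))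
      (le_principal_iff.2 self_mem_nhdsWithin) (hcont.mono Ioi_subset_Ici_self) hlim hright hy
  exact ⟨x, ⟨hx, hfx⟩, fun z ⟨hz, hfz⟩ ↦
    hanti.injOn (Ioi_subset_Ici_self hz) (Ioi_subset_Ici_self hx) (hfz.trans hfx.symm)⟩

theorem tendsto_cosh_atTop : Tendsto cosh atTop atTop := by
  simp only [funext cosh_eq]
  exact (tendsto_exp_atTop.atTop_add tendsto_exp_neg_atTop_nhds_zero).atTop_div_const two_pos

/-- The angle `θ(r)` under which the incenter of a hyperbolic polygon with inradius `r` sees the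
two tangency points adjacent to a vertex of interior angle `β`. -/
noncomputable def incenterAngle (β r : ℝ) : ℝ :=
  2 * arcsin (cos (β / 2) / cosh r)

theorem incenterAngle_zero {β : ℝ} (hβ : β ∈ Icc 0 (2 * π)) : incenterAngle β 0 = π - β := by
  rw [incenterAngle, cosh_zero, div_one, ← sin_pi_div_two_sub,
    arcsin_sin (by linarith [hβ.2]) (by linarith [hβ.1])]
  ring

theorem continuous_incenterAngle (β : ℝ) : Continuous (incenterAngle β) :=
  continuous_const.mul <| continuous_arcsin.comp <|
    continuous_const.div continuous_cosh fun r ↦ (cosh_pos r).ne'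

theorem tendsto_incenterAngle_atTop (β : ℝ) : Tendsto (incenterAngle β) atTop (𝓝 0) := by
  have hquot : Tendsto (fun r ↦ cos (β / 2) / cosh r) atTop (𝓝 0) :=
    tendsto_cosh_atTop.const_div_atTop _
  unfold incenterAngle
  simpa using ((continuous_arcsin.tendsto' 0 0 arcsin_zero).comp hquot).const_mul 2

theorem cos_div_cosh_mem_Icc (x r : ℝ) : cos x / cosh r ∈ Icc (-1) 1 := by
  rw [mem_Icc, ← abs_le, abs_div, abs_of_pos (cosh_pos r)]
  exact div_le_one_of_le₀ ((abs_cos_le_one x).trans (one_le_cosh r)) (cosh_pos r).le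

theorem strictAntiOn_incenterAngle {β : ℝ} (hβ : β ∈ Ioo (-π) π) :
    StrictAntiOn (incenterAngle β) (Ici 0) := by
  intro r hr s hs hrs
  have hcos : 0 < cos (β / 2) :=
    cos_pos_of_mem_Ioo ⟨by linarith [hβ.1], by linarith [hβ.2]⟩
  have hquot : cos (β / 2) / cosh s < cos (β / 2) / cosh r :=
    div_lt_div_of_pos_left hcos (cosh_pos r) (cosh_strictMonoOn hr hs hrs)
  exact mul_lt_mul_of_pos_left
    (strictMonoOn_arcsin (cos_div_cosh_mem_Icc _ s) (cos_div_cosh_mem_Icc _ r) hquot) two_pos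

/-- Geometrically, `φ` is the cone angle at the incenter and `β i = 0` is a vertex at infinity. -/
theorem inradius_exists_unique_general {ι : Type*} [Fintype ι] {β : ι → ℝ} {φ : ℝ}
    (hβ : ∀ i, β i ∈ Ico 0 π) (hφ : φ ∈ Ioo 0 (∑ i, (π - β i))) :
    ∃! r : ℝ, 0 < r ∧ ∑ i, incenterAngle (β i) r = φ := by
  have hne : (Finset.univ : Finset ι).Nonempty :=
    Finset.nonempty_of_sum_ne_zero (hφ.1.trans hφ.2).ne'
  have hanti : StrictAntiOn (fun r ↦ ∑ i, incenterAngle (β i) r) (Ici 0) :=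
    strictAntiOn_finsetSum hne fun i _ ↦
      strictAntiOn_incenterAngle ⟨(neg_lt_zero.2 pi_pos).trans_le (hβ i).1, (hβ i).2⟩
  have hcont : Continuous fun r ↦ ∑ i, incenterAngle (β i) r :=
    continuous_finsetSum _ fun i _ ↦ continuous_incenterAngle (β i)
  have hlim : Tendsto (fun r ↦ ∑ i, incenterAngle (β i) r) atTop (𝓝 0) := by
    simpa using tendsto_finsetSum Finset.univ fun i _ ↦ tendsto_incenterAngle_atTop (β i)
  have hzero : ∑ i, incenterAngle (β i) 0 = ∑ i, (π - β i) :=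
    Finset.sum_congr rfl fun i _ ↦
      incenterAngle_zero ⟨(hβ i).1, by linarith [(hβ i).2, pi_pos]⟩
  exact existsUnique_gt_eq_of_strictAntiOn_of_tendsto hanti hcont.continuousOn hlim
    ⟨hφ.1, hφ.2.trans_eq hzero.symm⟩

/-- Existence and uniqueness of the inradius of the convex hyperbolic polygon with
an inscribed circle and given angles: there is a unique `r > 0` with
`∑ i, 2 * arcsin (cos (β i / 2) / cosh r) = 2π`. -/
theorem inradius_exists_unique (n : ℕ) (hn : 3 ≤ n) (β : Fin n → ℝ)
    (hβ : ∀ i, 0 < β i ∧ β i < π)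
    (hsum : 2 * π < ∑ i, (π - β i)) :
    ∃! r : ℝ, 0 < r ∧
      ∑ i, 2 * Real.arcsin (Real.cos (β i / 2) / Real.cosh r) = 2 * π :=
  inradius_exists_unique_general (fun i ↦ ⟨(hβ i).1.le, (hβ i).2⟩) ⟨two_pi_pos, hsum⟩
end

section
/- Geodesics of the hyperbolic plane correspond bijectively to pairs of antipodal points of the de Sitter sphere: let e ∈ ℝ³ with η(e,e) = 1 and L_e = {x ∈ H² : η(x,e) = 0}. Then (a) there exist p, u ∈ ℝ³ with η(p,p) = −1, p 0 > 0, η(u,u) = 1, η(p,u) = 0, η(p,e) = 0, η(u,e) = 0, such that L_e = {(cosh t) • p + (sinh t) • u : t ∈ ℝ}; and (b) for any f ∈ ℝ³ with η(f,f) = 1, L_f = L_e if and only if f = e or f = −e. -/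
/-!
Complete `e` to an `η`-orthonormal frame `p, u, e` with `p` future timelike. Every vector is
recovered from its three `η`-products with the frame, so a point of the geodesic of `e` has the form
`a • p + b • u` with `a ^ 2 - b ^ 2 = 1`. Two future timelike vectors have negative product, hence
`0 < a`, and this branch of the hyperbola is parametrized by `(cosh t, sinh t)`. Conversely, if the
geodesic of `e` lies in that of `f`, its points at two parameters force `f` to be orthogonal to `p`
and to `u`; then `f` is a multiple of `e`, and for unit vectors the factor is `±1`.
-/

open Real

noncomputable section

/-- The Minkowski bilinear form on `ℝ³`. -/
def eta (x y : Fin 3 → ℝ) : ℝ := -(x 0 * y 0) + x 1 * y 1 + x 2 * y 2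

/-- The hyperbolic plane in the hyperboloid model. -/
def H2 : Set (Fin 3 → ℝ) := {x | eta x x = -1 ∧ 0 < x 0}

/-- The geodesic of `H²` with polar `e`. -/
def geodesicOf (e : Fin 3 → ℝ) : Set (Fin 3 → ℝ) := {x ∈ H2 | eta x e = 0}

theorem eq_sum_div_smul_of_isOrthoᵢ {K V ι : Type*} [Field K] [AddCommGroup V] [Module K V]
    [FiniteDimensional K V] [Fintype ι] {B : LinearMap.BilinForm K V} {v : ι → V}
    (hv : B.IsOrthoᵢ v) (hne : ∀ i, B (v i) (v i) ≠ 0)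
    (hcard : Fintype.card ι = Module.finrank K V) (x : V) :
    x = ∑ i, (B x (v i) / B (v i) (v i)) • v i := by
  have hspan : Submodule.span K (Set.range v) = ⊤ :=
    (LinearMap.linearIndependent_of_isOrthoᵢ hv hne).span_eq_top_of_card_eq_finrank' hcard
  obtain ⟨c, rfl⟩ : ∃ c : ι → K, ∑ i, c i • v i = x :=
    Submodule.mem_span_range_iff_exists_fun K |>.mp (hspan ▸ Submodule.mem_top)
  refine Finset.sum_congr rfl fun i _ ↦ ?_
  have hcoord : B (∑ j, c j • v j) (v i) = c i * B (v i) (v i) := by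
    simp only [map_sum, map_smul, LinearMap.sum_apply, LinearMap.smul_apply, smul_eq_mul]
    exact Finset.sum_eq_single i (fun j _ hji ↦ by rw [hv hji, mul_zero]) (by simp)
  rw [hcoord, mul_div_cancel_right₀ _ (hne i)]

theorem exists_cosh_eq_sinh_eq {a b : ℝ} (h : a ^ 2 - b ^ 2 = 1) (ha : 0 < a) :
    ∃ t : ℝ, cosh t = a ∧ sinh t = b := by
  refine ⟨arsinh b, ?_, sinh_arsinh b⟩
  rw [cosh_arsinh, ← eq_add_of_sub_eq h, sqrt_sq ha.le]

theorem eta_comm (x y : Fin 3 → ℝ) : eta x y = eta y x := by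
  unfold eta
  ring

/-- The Minkowski form `eta` bundled as a bilinear form, which gives access to the library's theory
of orthogonal families. -/
def etaForm : LinearMap.BilinForm ℝ (Fin 3 → ℝ) :=
  LinearMap.mk₂ ℝ eta
    (fun x y z ↦ by simp only [eta, Pi.add_apply]; ring)
    (fun c x y ↦ by simp only [eta, Pi.smul_apply, smul_eq_mul]; ring)
    (fun x y z ↦ by simp only [eta, Pi.add_apply]; ring)
    (fun c x y ↦ by simp only [eta, Pi.smul_apply, smul_eq_mul]; ring)

theorem etaForm_apply (x y : Fin 3 → ℝ) : etaForm x y = eta x y := rfl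

theorem eta_add_left (x y z : Fin 3 → ℝ) : eta (x + y) z = eta x z + eta y z :=
  etaForm.map_add₂ x y z

theorem eta_add_right (x y z : Fin 3 → ℝ) : eta x (y + z) = eta x y + eta x z :=
  (etaForm x).map_add y z

theorem eta_smul_left (c : ℝ) (x y : Fin 3 → ℝ) : eta (c • x) y = c * eta x y :=
  etaForm.map_smul₂ c x y

theorem eta_smul_right (c : ℝ) (x y : Fin 3 → ℝ) : eta x (c • y) = c * eta x y :=
  (etaForm x).map_smul c y

theorem eta_neg_right (x y : Fin 3 → ℝ) : eta x (-y) = -eta x y :=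
  (etaForm x).map_neg y

theorem eta_neg_neg (x y : Fin 3 → ℝ) : eta (-x) (-y) = eta x y := by
  rw [eta_neg_right, eta_comm, eta_neg_right, neg_neg, eta_comm]

theorem eta_neg_of_timelike_of_pos {x y : Fin 3 → ℝ} (hx : eta x x < 0) (hy : eta y y < 0)
    (hx₀ : 0 < x 0) (hy₀ : 0 < y 0) : eta x y < 0 := by
  unfold eta at *
  have hcauchy : (x 1 * y 1 + x 2 * y 2) ^ 2 ≤ (x 1 ^ 2 + x 2 ^ 2) * (y 1 ^ 2 + y 2 ^ 2) := by
    linarith [sq_nonneg (x 1 * y 2 - x 2 * y 1)]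
  have hcone : (x 1 ^ 2 + x 2 ^ 2) * (y 1 ^ 2 + y 2 ^ 2) < x 0 ^ 2 * y 0 ^ 2 :=
    mul_lt_mul'' (by linarith) (by linarith) (by positivity) (by positivity)
  have hlt : x 1 * y 1 + x 2 * y 2 < x 0 * y 0 :=
    lt_of_pow_lt_pow_left₀ 2 (by positivity) (by linarith [mul_pow (x 0) (y 0) 2])
  linarith

theorem apply_zero_ne_zero_of_timelike {x : Fin 3 → ℝ} (hx : eta x x < 0) : x 0 ≠ 0 := by
  intro h₀
  simp only [eta, h₀] at hx
  linarith [mul_self_nonneg (x 1), mul_self_nonneg (x 2)]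

theorem eta_neg_iff_of_timelike {x y : Fin 3 → ℝ} (hx : eta x x < 0) (hx₀ : 0 < x 0)
    (hy : eta y y < 0) : eta x y < 0 ↔ 0 < y 0 := by
  refine ⟨fun hxy ↦ ?_, eta_neg_of_timelike_of_pos hx hy hx₀⟩
  by_contra! hy₀
  have hneg : 0 < (-y) 0 := neg_pos.mpr (hy₀.lt_of_ne (apply_zero_ne_zero_of_timelike hy))
  have := eta_neg_of_timelike_of_pos hx ((eta_neg_neg y y).trans_lt hy) hx₀ hneg
  rw [eta_neg_right] at this
  linarith

theorem mem_geodesicOf_iff {e x : Fin 3 → ℝ} :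
    x ∈ geodesicOf e ↔ (eta x x = -1 ∧ 0 < x 0) ∧ eta x e = 0 := Iff.rfl

theorem geodesicOf_nonempty {e : Fin 3 → ℝ} (he : eta e e = 1) : (geodesicOf e).Nonempty := by
  let τ : Fin 3 → ℝ := ![1, 0, 0]
  -- the projection of the time axis to the orthogonal complement of `e`
  let a : Fin 3 → ℝ := τ + e 0 • e
  let r : ℝ := √(1 + e 0 ^ 2)
  have hr : 0 < r := by positivity
  have hr_sq : r ^ 2 = 1 + e 0 ^ 2 := sq_sqrt (by positivity)
  have hτ (x : Fin 3 → ℝ) : eta τ x = -x 0 := by simp [eta, τ]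
  have ha (x : Fin 3 → ℝ) : eta a x = -x 0 + e 0 * eta e x := by
    rw [eta_add_left, eta_smul_left, hτ]
  have hae : eta a e = 0 := by rw [ha, he, mul_one, neg_add_cancel]
  have ha₀ : a 0 = r ^ 2 := by
    simp only [a, τ, hr_sq, sq, Pi.add_apply, Pi.smul_apply, smul_eq_mul, Matrix.cons_val_zero]
  have haa : eta a a = -r ^ 2 := by rw [ha, eta_comm e a, hae, ha₀, mul_zero, add_zero]
  refine ⟨r⁻¹ • a, ⟨?_, ?_⟩, ?_⟩
  · rw [eta_smul_left, eta_smul_right, haa]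
    field_simp
  · rw [Pi.smul_apply, ha₀, smul_eq_mul]
    positivity
  · rw [eta_smul_left, hae, mul_zero]

/-- The Lorentzian cross product: the vector representing `z ↦ det (x, y, z)` through `eta`, that
is, the Euclidean cross product with the sign of its time coordinate reversed. -/
def lorentzCross (x y : Fin 3 → ℝ) : Fin 3 → ℝ :=
  ![-(x 1 * y 2 - x 2 * y 1), x 2 * y 0 - x 0 * y 2, x 0 * y 1 - x 1 * y 0]

theorem eta_self_lorentzCross (x y : Fin 3 → ℝ) : eta x (lorentzCross x y) = 0 := by
  simp only [eta, lorentzCross, Matrix.cons_val]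
  ring

theorem eta_lorentzCross_self (x y : Fin 3 → ℝ) : eta (lorentzCross x y) y = 0 := by
  simp only [eta, lorentzCross, Matrix.cons_val]
  ring

theorem eta_lorentzCross_lorentzCross (x y : Fin 3 → ℝ) :
    eta (lorentzCross x y) (lorentzCross x y) = eta x y ^ 2 - eta x x * eta y y := by
  simp only [eta, lorentzCross, Matrix.cons_val]
  ring

/-- An orthonormal frame `p, u, e` of Minkowski space adapted to the geodesic with polar `e`:
`p` is a point of the geodesic and `u` is a unit tangent vector to the geodesic at `p`. -/
structure IsPolarFrame (p u e : Fin 3 → ℝ) : Prop where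
  point_mem : p ∈ geodesicOf e
  tangent_self : eta u u = 1
  polar_self : eta e e = 1
  point_tangent : eta p u = 0
  tangent_polar : eta u e = 0

theorem exists_isPolarFrame {e : Fin 3 → ℝ} (he : eta e e = 1) : ∃ p u, IsPolarFrame p u e := by
  obtain ⟨p, hp⟩ := geodesicOf_nonempty he
  have hu : eta (lorentzCross p e) (lorentzCross p e) = 1 := by
    rw [eta_lorentzCross_lorentzCross, hp.2, hp.1.1, he]
    norm_num
  exact ⟨p, lorentzCross p e, hp, hu, he, eta_self_lorentzCross p e, eta_lorentzCross_self p e⟩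

namespace IsPolarFrame

variable {p u e : Fin 3 → ℝ}

theorem point_self (h : IsPolarFrame p u e) : eta p p = -1 := h.point_mem.1.1

theorem point_zero_pos (h : IsPolarFrame p u e) : 0 < p 0 := h.point_mem.1.2

theorem point_polar (h : IsPolarFrame p u e) : eta p e = 0 := h.point_mem.2

theorem eq_combination (h : IsPolarFrame p u e) (x : Fin 3 → ℝ) :
    x = -eta x p • p + eta x u • u + eta x e • e := by
  have hortho : etaForm.IsOrthoᵢ ![p, u, e] := by
    rw [LinearMap.isOrthoᵢ_def]
    intro i j hij
    fin_cases i <;> fin_cases j <;>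
      simp_all [etaForm_apply, h.point_tangent, h.tangent_polar, h.point_polar,
        eta_comm u p, eta_comm e p, eta_comm e u]
  have hne : ∀ i, etaForm (![p, u, e] i) (![p, u, e] i) ≠ 0 := by
    intro i
    fin_cases i <;> simp [etaForm_apply, h.point_self, h.tangent_self, h.polar_self]
  simpa [Fin.sum_univ_three, etaForm_apply, h.point_self, h.tangent_self, h.polar_self, div_neg]
    using eq_sum_div_smul_of_isOrthoᵢ hortho hne (by simp) x

theorem eta_combination_self (h : IsPolarFrame p u e) (a b : ℝ) :
    eta (a • p + b • u) (a • p + b • u) = b ^ 2 - a ^ 2 := by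
  simp only [eta_add_left, eta_add_right, eta_smul_left, eta_smul_right, h.point_self,
    h.tangent_self, h.point_tangent, eta_comm u p]
  ring

theorem combination_mem_geodesicOf_iff (h : IsPolarFrame p u e) {a b : ℝ} :
    a • p + b • u ∈ geodesicOf e ↔ a ^ 2 - b ^ 2 = 1 ∧ 0 < a := by
  have hpolar : eta (a • p + b • u) e = 0 := by
    simp only [eta_add_left, eta_smul_left, h.point_polar, h.tangent_polar, mul_zero, add_zero]
  have hpoint : eta p (a • p + b • u) = -a := by
    simp only [eta_add_right, eta_smul_right, h.point_self, h.point_tangent]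
    ring
  have hself : eta (a • p + b • u) (a • p + b • u) = -1 ↔ a ^ 2 - b ^ 2 = 1 := by
    rw [h.eta_combination_self, ← neg_sub, neg_inj]
  have hpp : eta p p < 0 := by linarith [h.point_self]
  rw [mem_geodesicOf_iff, and_iff_left hpolar, hself]
  refine and_congr_right fun hab ↦ ?_
  rw [← eta_neg_iff_of_timelike hpp h.point_zero_pos (by linarith [hself.mpr hab]), hpoint,
    neg_lt_zero]

theorem geodesicOf_eq (h : IsPolarFrame p u e) :
    geodesicOf e = {y | ∃ t : ℝ, y = cosh t • p + sinh t • u} := by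
  ext y
  constructor
  · intro hy
    have hy_eq : y = -eta y p • p + eta y u • u := by
      simpa [hy.2] using h.eq_combination y
    obtain ⟨hab, ha⟩ := h.combination_mem_geodesicOf_iff.mp (hy_eq ▸ hy)
    obtain ⟨t, hcosh, hsinh⟩ := exists_cosh_eq_sinh_eq hab ha
    exact ⟨t, by rw [hcosh, hsinh, ← hy_eq]⟩
  · rintro ⟨t, rfl⟩
    exact h.combination_mem_geodesicOf_iff.mpr ⟨cosh_sq_sub_sinh_sq t, cosh_pos t⟩

theorem eta_tangent_eq_zero_of_subset (h : IsPolarFrame p u e) {f : Fin 3 → ℝ}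
    (hsub : geodesicOf e ⊆ geodesicOf f) : eta u f = 0 := by
  have hpf : eta p f = 0 := (hsub h.point_mem).2
  have hmem : cosh 1 • p + sinh 1 • u ∈ geodesicOf e := h.geodesicOf_eq ▸ ⟨1, rfl⟩
  have hqf : eta (cosh 1 • p + sinh 1 • u) f = 0 := (hsub hmem).2
  have hsinh : sinh 1 ≠ 0 := (sinh_pos_iff.mpr one_pos).ne'
  simpa [eta_add_left, eta_smul_left, hpf, hsinh] using hqf

end IsPolarFrame

theorem geodesicOf_subset_geodesicOf_iff {e f : Fin 3 → ℝ} (he : eta e e = 1) :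
    geodesicOf e ⊆ geodesicOf f ↔ ∃ c : ℝ, f = c • e := by
  constructor
  · intro hsub
    obtain ⟨p, u, h⟩ := exists_isPolarFrame he
    have hfp : eta f p = 0 := eta_comm f p ▸ (hsub h.point_mem).2
    have hfu : eta f u = 0 := eta_comm f u ▸ h.eta_tangent_eq_zero_of_subset hsub
    exact ⟨eta f e, by simpa [hfp, hfu] using h.eq_combination f⟩
  · rintro ⟨c, rfl⟩ x ⟨hx, hxe⟩
    exact ⟨hx, by rw [eta_smul_right, hxe, mul_zero]⟩

theorem geodesicOf_neg (e : Fin 3 → ℝ) : geodesicOf (-e) = geodesicOf e := by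
  simp only [geodesicOf, eta_neg_right, neg_eq_zero]

theorem geodesicOf_eq_geodesicOf_iff {e f : Fin 3 → ℝ} (he : eta e e = 1) (hf : eta f f = 1) :
    geodesicOf f = geodesicOf e ↔ f = e ∨ f = -e := by
  constructor
  · intro heq
    obtain ⟨c, rfl⟩ := (geodesicOf_subset_geodesicOf_iff he).mp heq.ge
    have hc : c * c = 1 := by
      rwa [eta_smul_left, eta_smul_right, he, mul_one] at hf
    rcases mul_self_eq_one_iff.mp hc with rfl | rfl
    · exact .inl (one_smul ℝ e)
    · exact .inr (neg_one_smul ℝ e)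
  · rintro (rfl | rfl)
    · rfl
    · exact geodesicOf_neg e

/-- Geodesics of the hyperbolic plane correspond bijectively to pairs of antipodal
points of the de Sitter sphere: the geodesic with unit spacelike polar `e` is a
complete geodesic parametrized as `cosh t • p + sinh t • u`, and two unit spacelike
vectors define the same geodesic iff they are equal or antipodal. -/
theorem geodesic_polar_bijection (e : Fin 3 → ℝ) (he : eta e e = 1) :
    (∃ p u : Fin 3 → ℝ,
      eta p p = -1 ∧ 0 < p 0 ∧ eta u u = 1 ∧ eta p u = 0 ∧
      eta p e = 0 ∧ eta u e = 0 ∧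
      geodesicOf e = {y | ∃ t : ℝ, y = Real.cosh t • p + Real.sinh t • u}) ∧
    (∀ f : Fin 3 → ℝ, eta f f = 1 →
      (geodesicOf f = geodesicOf e ↔ f = e ∨ f = -e)) := by
  obtain ⟨p, u, h⟩ := exists_isPolarFrame he
  exact ⟨⟨p, u, h.point_self, h.point_zero_pos, h.tangent_self, h.point_tangent, h.point_polar,
    h.tangent_polar, h.geodesicOf_eq⟩, fun _ hf ↦ geodesicOf_eq_geodesicOf_iff he hf⟩
end
end

section
/- Derivative of the holonomy map of a polygonal path: fix n ≥ 1 and β : Fin n → ℝ. Define B(t) = ![![cosh t, sinh t, 0], ![sinh t, cosh t, 0], ![0,0,1]], R(θ) = ![![1,0,0], ![0, cos θ, −sin θ], ![0, sin θ, cos θ]], and X = ![![0,1,0], ![1,0,0], ![0,0,0]]. For ℓ : Fin n → ℝ let G(ℓ) = ∏_{i=0}^{n−1} B(ℓ i) · R(π − β i) (ordered matrix product) and, for each i, let Pᵢ(ℓ) = ∏_{j=0}^{i−1} B(ℓ j) · R(π − β j) (ordered product of the first i factors, with P₀ = 1). Then for every ℓ and every i, the partial derivative of G with respect to ℓ i at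 ℓ equals Pᵢ(ℓ) · X · (Pᵢ(ℓ))⁻¹ · G(ℓ). -/
open Real Matrix

noncomputable section

attribute [local instance] Matrix.normedAddCommGroup Matrix.normedSpace

/-- Hyperbolic translation of length `t` along a geodesic through the base point. -/
def Bmat (t : ℝ) : Matrix (Fin 3) (Fin 3) ℝ :=
  ![![Real.cosh t, Real.sinh t, 0], ![Real.sinh t, Real.cosh t, 0], ![0, 0, 1]]

/-- Rotation by `θ` about the base point `(1,0,0)` of the hyperboloid. -/
def Rmat (θ : ℝ) : Matrix (Fin 3) (Fin 3) ℝ :=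
  ![![1, 0, 0], ![0, Real.cos θ, -Real.sin θ], ![0, Real.sin θ, Real.cos θ]]

/-- The infinitesimal translation `X = B'(0)`. -/
def Xmat : Matrix (Fin 3) (Fin 3) ℝ := ![![0, 1, 0], ![1, 0, 0], ![0, 0, 0]]

/-- Ordered product of the first `k` factors `B (ℓ j) * R (π - β j)`. -/
def partialProd (n : ℕ) (β : Fin n → ℝ) (ℓ : Fin n → ℝ) : ℕ → Matrix (Fin 3) (Fin 3) ℝ
  | 0 => 1
  | k + 1 => partialProd n β ℓ k *
      (if h : k < n then Bmat (ℓ ⟨k, h⟩) * Rmat (π - β ⟨k, h⟩) else 1)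

/-- The holonomy of the polygonal path with edge lengths `ℓ` and angles `β`:
the ordered product `∏_{i=0}^{n-1} B (ℓ i) * R (π - β i)`. -/
def holonomy (n : ℕ) (β : Fin n → ℝ) (ℓ : Fin n → ℝ) : Matrix (Fin 3) (Fin 3) ℝ :=
  partialProd n β ℓ n

/-!
Translations along a geodesic form a one-parameter group, `B (s + t) = B s * B t`. Hence changing
the `i`-th edge length from `ℓ i` to `t` replaces the factor `B (ℓ i)` by
`B (t - ℓ i) * B (ℓ i)`, which multiplies the whole holonomy on the left by the conjugate
`Pᵢ * B (t - ℓ i) * Pᵢ⁻¹`. Only this conjugate depends on `t`, and the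
derivative of `B` at `0` is `X`.
-/

section MatrixDeriv

variable {𝕜 R l m n p : Type*} [NontriviallyNormedField 𝕜] [NormedRing R] [NormedAlgebra 𝕜 R]

theorem hasDerivAt_matrix [Finite m] [Finite n] {F : 𝕜 → Matrix m n R} {F' : Matrix m n R} {x : 𝕜} :
    HasDerivAt F F' x ↔ ∀ a b, HasDerivAt (fun t => F t a b) (F' a b) x := by
  cases nonempty_fintype m
  cases nonempty_fintype n
  exact (hasDerivAt_pi (φ := F) (φ' := F')).trans <|
    forall_congr' fun a => hasDerivAt_pi (φ := fun t => F t a) (φ' := F' a)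

theorem hasDerivAt_const_matrix_mul [Finite l] [Fintype m] [Finite n]
    {F : 𝕜 → Matrix m n R} {F' : Matrix m n R} {x : 𝕜} (A : Matrix l m R) (hF : HasDerivAt F F' x) :
    HasDerivAt (fun t => A * F t) (A * F') x :=
  hasDerivAt_matrix.2 fun a b =>
    HasDerivAt.fun_sum fun c _ => (hasDerivAt_matrix.1 hF c b).const_mul (A a c)

theorem hasDerivAt_matrix_mul_const [Finite m] [Fintype n] [Finite p]
    {F : 𝕜 → Matrix m n R} {F' : Matrix m n R} {x : 𝕜} (hF : HasDerivAt F F' x) (C : Matrix n p R) :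
    HasDerivAt (fun t => F t * C) (F' * C) x :=
  hasDerivAt_matrix.2 fun a b =>
    HasDerivAt.fun_sum fun c _ => (hasDerivAt_matrix.1 hF a c).mul_const (C c b)

end MatrixDeriv

theorem hasDerivAt_Bmat_zero : HasDerivAt Bmat Xmat 0 := by
  have hcosh : HasDerivAt Real.cosh 0 0 := by simpa using Real.hasDerivAt_cosh 0
  have hsinh : HasDerivAt Real.sinh 1 0 := by simpa using Real.hasDerivAt_sinh 0
  rw [hasDerivAt_matrix]
  intro a b
  fin_cases a <;> fin_cases b
  exacts [hcosh, hsinh, hasDerivAt_const _ _, hsinh, hcosh, hasDerivAt_const _ _,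
    hasDerivAt_const _ _, hasDerivAt_const _ _, hasDerivAt_const _ _]

theorem Bmat_add (s t : ℝ) : Bmat (s + t) = Bmat s * Bmat t := by
  ext a b
  rw [Matrix.mul_apply, Fin.sum_univ_three]
  fin_cases a <;> fin_cases b <;> simp [Bmat, Real.cosh_add, Real.sinh_add, add_comm]

theorem det_Bmat (t : ℝ) : (Bmat t).det = 1 := by
  rw [Matrix.det_fin_three]
  simp [Bmat, ← sq]

theorem det_Rmat (θ : ℝ) : (Rmat θ).det = 1 := by
  rw [Matrix.det_fin_three]
  simp [Rmat, ← sq]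

section PartialProd

variable {n : ℕ} (β ℓ : Fin n → ℝ)

theorem partialProd_succ {k : ℕ} (hk : k < n) :
    partialProd n β ℓ (k + 1) =
      partialProd n β ℓ k * (Bmat (ℓ ⟨k, hk⟩) * Rmat (π - β ⟨k, hk⟩)) := by
  rw [partialProd, dif_pos hk]

theorem det_partialProd (k : ℕ) : (partialProd n β ℓ k).det = 1 := by
  induction k with
  | zero => exact Matrix.det_one
  | succ k ih =>
    rw [partialProd, Matrix.det_mul, ih]
    split_ifs <;> simp [det_Bmat, det_Rmat]

theorem partialProd_congr {ℓ₁ ℓ₂ : Fin n → ℝ} {k : ℕ}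
    (h : ∀ j : Fin n, (j : ℕ) < k → ℓ₁ j = ℓ₂ j) :
    partialProd n β ℓ₁ k = partialProd n β ℓ₂ k := by
  induction k with
  | zero => rfl
  | succ k ih =>
    simp only [partialProd, ih fun j hj => h j (hj.trans k.lt_succ_self)]
    split_ifs with hk
    · rw [h ⟨k, hk⟩ k.lt_succ_self]
    · rfl

theorem partialProd_update_of_le {i : Fin n} {k : ℕ} (hk : k ≤ i) (t : ℝ) :
    partialProd n β (Function.update ℓ i t) k = partialProd n β ℓ k :=
  partialProd_congr β fun _ hj =>
    Function.update_of_ne (Fin.ne_of_lt (hj.trans_le hk)) t ℓ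

theorem partialProd_update_of_lt {i : Fin n} {k : ℕ} (hk : (i : ℕ) < k) (t : ℝ) :
    partialProd n β (Function.update ℓ i t) k =
      partialProd n β ℓ i * Bmat (t - ℓ i) * (partialProd n β ℓ i)⁻¹ * partialProd n β ℓ k := by
  induction k, hk using Nat.le_induction with
  | base =>
    set P := partialProd n β ℓ i
    have hP : P⁻¹ * P = 1 := Matrix.nonsing_inv_mul P (by simp [P, det_partialProd])
    calc partialProd n β (Function.update ℓ i t) (i + 1)
        = P * (Bmat t * Rmat (π - β i)) := by
          rw [partialProd_succ β _ i.isLt, partialProd_update_of_le β ℓ le_rfl,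
            Function.update_self]
      _ = P * (Bmat (t - ℓ i) * Bmat (ℓ i) * Rmat (π - β i)) := by
          rw [← Bmat_add, sub_add_cancel]
      _ = P * Bmat (t - ℓ i) * (P⁻¹ * P) * (Bmat (ℓ i) * Rmat (π - β i)) := by
          simp only [hP, Matrix.mul_one, Matrix.mul_assoc]
      _ = P * Bmat (t - ℓ i) * P⁻¹ * partialProd n β ℓ (i + 1) := by
          simp only [partialProd_succ β ℓ i.isLt, P, Matrix.mul_assoc]
  | succ k hk ih =>
    have hne (h : k < n) : (⟨k, h⟩ : Fin n) ≠ i := Fin.ne_of_gt hk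
    simp only [partialProd, ih, Function.update_of_ne (hne _), Matrix.mul_assoc]

end PartialProd

/-- Derivative of the holonomy map of a polygonal path: the partial derivative of
`G = holonomy` with respect to `ℓ i` is `Pᵢ * X * Pᵢ⁻¹ * G ℓ`, where `Pᵢ` is the
ordered product of the first `i` factors. -/
theorem holonomy_partial_deriv (n : ℕ) (hn : 1 ≤ n) (β : Fin n → ℝ)
    (ℓ : Fin n → ℝ) (i : Fin n) :
    HasDerivAt (fun t : ℝ => holonomy n β (Function.update ℓ i t))
      (partialProd n β ℓ i * Xmat * (partialProd n β ℓ i)⁻¹ * holonomy n β ℓ)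
      (ℓ i) := by
  have hB : HasDerivAt (fun t => Bmat (t - ℓ i)) Xmat (ℓ i) :=
    HasDerivAt.comp_sub_const (ℓ i) (ℓ i) (by rw [sub_self]; exact hasDerivAt_Bmat_zero)
  simp only [holonomy, partialProd_update_of_lt β ℓ i.isLt]
  exact hasDerivAt_matrix_mul_const (hasDerivAt_matrix_mul_const
    (hasDerivAt_const_matrix_mul (partialProd n β ℓ i) hB) _) _
end
end
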